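/- The exponential growth rate of the number of ST-admissible words equals the capacity of the ST constraint: lim_{m→∞} (log₂ N4(m))/m = log₂(1 + √2), where 1 + √2 is the largest root of x² − 2x − 1. -/

import Mathlib

/-! Call a pair of letters free when three letters may precede it, rather than two. Among the pairs
formed by a letter that may precede `b c` and `b` itself, exactly one is free, and the others are
two if `b c` is free and one if it is not. The transfer matrix thus collapses to `!![1, 2; 1, 1]`,
whose characteristic polynomial is `x² - 2x - 1` and whose eigenvector `(√2, 1)` has eigenvalue
`1 + √2`. Counting admissible words with the weight `√2` or `1` of their first two letters, each
additional letter multiplies the total by exactly `1 + √2`; the weights are bounded above and below,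
so the unweighted count has the same exponential growth rate. -/

namespace STLOCO

/-- Forbidden 2-tuples of `ST⁴`, read left-to-right. -/
def STpair (a b : Fin 4) : Prop :=
  (a = 0 ∧ b = 1) ∨ (a = 1 ∧ b = 0) ∨ (a = 1 ∧ b = 2) ∨
  (a = 2 ∧ b = 1) ∨ (a = 2 ∧ b = 3) ∨ (a = 3 ∧ b = 2)

/-- Forbidden 3-tuples of `ST⁴`, read left-to-right. -/
def STtriple (a x b : Fin 4) : Prop :=
  (a = 0 ∧ x = 3 ∧ b = 0) ∨ (a = 3 ∧ x = 0 ∧ b = 3)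

instance (a b : Fin 4) : Decidable (STpair a b) := by unfold STpair; infer_instance
instance (a x b : Fin 4) : Decidable (STtriple a x b) := by unfold STtriple; infer_instance

/-- A word `w : Fin m → Fin 4` (index `0` is the leftmost symbol) is ST-admissible. -/
def STadm {m : ℕ} (w : Fin m → Fin 4) : Prop :=
  (∀ i j : Fin m, (j : ℕ) = (i : ℕ) + 1 → ¬ STpair (w i) (w j)) ∧
  (∀ i j k : Fin m, (j : ℕ) = (i : ℕ) + 1 → (k : ℕ) = (i : ℕ) + 2 →
    ¬ STtriple (w i) (w j) (w k))

instance {m : ℕ} : DecidablePred (@STadm m) := fun w => by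
  unfold STadm; infer_instance

/-- Number of ST-admissible words of length `m`, with the convention `N4 0 = 2`. -/
def N4 (m : ℕ) : ℕ :=
  if m = 0 then 2
  else (Finset.univ.filter (fun w : Fin m → Fin 4 => STadm w)).card

section Growth

open Asymptotics Filter Topology

theorem log_sub_log_le_of_abs_le {x y c : ℝ} (hx : x ≠ 0) (hy : y ≠ 0) (hc : 0 < c)
    (h : |x| ≤ c * |y|) : Real.log x - Real.log y ≤ Real.log c := by
  rw [sub_le_iff_le_add, ← Real.log_abs x, ← Real.log_abs y,
    ← Real.log_mul hc.ne' (abs_ne_zero.2 hy)]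
  exact Real.log_le_log (abs_pos.2 hx) h

theorem isBigO_one_log_sub_log_of_isTheta {ι : Type*} {l : Filter ι} {f g : ι → ℝ}
    (hfg : f =Θ[l] g) (hg : ∀ᶠ i in l, g i ≠ 0) :
    (fun i ↦ Real.log (f i) - Real.log (g i)) =O[l] (fun _ ↦ (1 : ℝ)) := by
  obtain ⟨C, hC, hfC⟩ := hfg.isBigO.exists_pos
  obtain ⟨D, hD, hgD⟩ := hfg.isBigO_symm.exists_pos
  refine IsBigO.of_bound (max (Real.log C) (Real.log D)) ?_
  filter_upwards [hfC.bound, hgD.bound, hg, hfg.eq_zero_iff] with i hf hg' hgi hzero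
  have hfi : f i ≠ 0 := mt hzero.1 hgi
  rw [norm_one, mul_one, Real.norm_eq_abs, abs_le', neg_sub]
  exact ⟨le_max_of_le_left (log_sub_log_le_of_abs_le hfi hgi hC hf),
    le_max_of_le_right (log_sub_log_le_of_abs_le hgi hfi hD hg')⟩

theorem tendsto_logb_div_of_isTheta_pow {f : ℕ → ℝ} {r : ℝ} (b : ℝ) (hr : r ≠ 0)
    (hf : f =Θ[atTop] fun m ↦ r ^ m) :
    Tendsto (fun m : ℕ ↦ Real.logb b (f m) / m) atTop (𝓝 (Real.logb b r)) := by
  have hbounded := isBigO_one_log_sub_log_of_isTheta hf (.of_forall fun m ↦ pow_ne_zero m hr)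
  have hlittle : (fun m ↦ Real.log (f m) - Real.log (r ^ m)) =o[atTop] fun m : ℕ ↦ (m : ℝ) :=
    hbounded.trans_isLittleO <|
      (isLittleO_const_id_atTop 1).comp_tendsto tendsto_natCast_atTop_atTop
  have hlog : Tendsto (fun m : ℕ ↦ Real.log (f m) / m) atTop (𝓝 (Real.log r)) := by
    have hlim := hlittle.tendsto_div_nhds_zero.add_const (Real.log r)
    rw [zero_add] at hlim
    refine hlim.congr' ?_
    filter_upwards [eventually_ne_atTop 0] with m hm
    rw [Real.log_pow, sub_div, mul_div_cancel_left₀ _ (Nat.cast_ne_zero.2 hm), sub_add_cancel]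
  refine (hlog.div_const (Real.log b)).congr fun m ↦ ?_
  rw [Real.logb, div_right_comm]

end Growth

section Words

variable {α : Type*} {n : ℕ}

theorem sum_univ_fin_cons {M : Type*} [Fintype α] [AddCommMonoid M]
    (f : (Fin (n + 1) → α) → M) :
    ∑ w, f w = ∑ w : Fin n → α, ∑ a, f (Fin.cons a w) := by
  rw [← (Fin.consEquiv fun _ ↦ α).sum_comp, Fintype.sum_prod_type_right]
  rfl

theorem forall_consecutive_cons_iff (R : α → α → Prop) (a : α) (w : Fin (n + 1) → α) :
    (∀ i j : Fin (n + 2), (j : ℕ) = i + 1 →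
        R ((Fin.cons a w : Fin (n + 2) → α) i) ((Fin.cons a w : Fin (n + 2) → α) j)) ↔
      R a (w 0) ∧ ∀ i j : Fin (n + 1), (j : ℕ) = i + 1 → R (w i) (w j) := by
  simp [Fin.forall_fin_succ (n := n + 1)]

theorem forall_consecutive_triple_cons_iff (T : α → α → α → Prop) (a : α) (w : Fin (n + 2) → α) :
    (∀ i j k : Fin (n + 3), (j : ℕ) = i + 1 → (k : ℕ) = i + 2 →
        T ((Fin.cons a w : Fin (n + 3) → α) i) ((Fin.cons a w : Fin (n + 3) → α) j)
          ((Fin.cons a w : Fin (n + 3) → α) k)) ↔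
      T a (w 0) (w 1) ∧
        ∀ i j k : Fin (n + 2), (j : ℕ) = i + 1 → (k : ℕ) = i + 2 → T (w i) (w j) (w k) := by
  have val_eq_one (k : Fin (n + 2)) : (k : ℕ) = 1 ↔ k = 1 := by rw [Fin.ext_iff, Fin.val_one]
  simp [Fin.forall_fin_succ (n := n + 2), val_eq_one]

end Words

section AdmissibleWords

open Asymptotics Filter Finset

/-- `a` may be written in front of an admissible word that starts with `b c`. -/
def CanPrecede (a b c : Fin 4) : Prop := ¬ STpair a b ∧ ¬ STtriple a b c

instance (a b c : Fin 4) : Decidable (CanPrecede a b c) := by unfold CanPrecede; infer_instance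

theorem STadm_cons_iff {m : ℕ} (a : Fin 4) (w : Fin (m + 2) → Fin 4) :
    STadm (Fin.cons a w : Fin (m + 3) → Fin 4) ↔ CanPrecede a (w 0) (w 1) ∧ STadm w := by
  unfold STadm CanPrecede
  rw [forall_consecutive_cons_iff (fun x y ↦ ¬ STpair x y),
    forall_consecutive_triple_cons_iff (fun x y z ↦ ¬ STtriple x y z)]
  exact and_and_and_comm

/-- The pairs `b c` that three letters, rather than two, can precede. -/
def IsFree (b c : Fin 4) : Prop := (b = 0 ∧ c ≠ 3) ∨ (b = 3 ∧ c ≠ 0)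

instance (b c : Fin 4) : Decidable (IsFree b c) := by unfold IsFree; infer_instance

/-- The Perron eigenvector of the transfer matrix on pairs of letters, normalized to be `1` on the
pairs that are not free. -/
noncomputable def perronWeight (b c : Fin 4) : ℝ := if IsFree b c then √2 else 1

theorem one_le_perronWeight (b c : Fin 4) : 1 ≤ perronWeight b c := by
  unfold perronWeight
  split_ifs
  exacts [Real.one_le_sqrt.2 one_le_two, le_rfl]

theorem perronWeight_le_sqrt_two (b c : Fin 4) : perronWeight b c ≤ √2 := by
  unfold perronWeight
  split_ifs
  exacts [le_rfl, Real.one_le_sqrt.2 one_le_two]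

theorem sum_perronWeight {ι : Type*} (s : Finset ι) (b c : ι → Fin 4) :
    ∑ i ∈ s, perronWeight (b i) (c i) =
      #{i ∈ s | IsFree (b i) (c i)} * √2 + #{i ∈ s | ¬ IsFree (b i) (c i)} := by
  simp only [perronWeight, sum_ite, sum_const, nsmul_eq_mul, mul_one]

theorem card_canPrecede_isFree (b c : Fin 4) :
    #{a ∈ {a | CanPrecede a b c} | IsFree a b} = 1 := by
  revert b c
  decide

theorem card_canPrecede_not_isFree (b c : Fin 4) :
    #{a ∈ {a | CanPrecede a b c} | ¬ IsFree a b} = if IsFree b c then 2 else 1 := by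
  revert b c
  decide

theorem sum_perronWeight_canPrecede (b c : Fin 4) :
    ∑ a with CanPrecede a b c, perronWeight a b = (1 + √2) * perronWeight b c := by
  have hsq : √2 * √2 = (2 : ℝ) := Real.mul_self_sqrt zero_le_two
  refine (sum_perronWeight _ (fun a ↦ a) fun _ ↦ b).trans ?_
  rw [card_canPrecede_isFree, card_canPrecede_not_isFree, perronWeight]
  split_ifs
  · push_cast
    linear_combination -hsq
  · push_cast
    ring

/-- The admissible words of length `m + 2`, counted with the `perronWeight` of their first two
letters. -/
noncomputable def weightedCount (m : ℕ) : ℝ :=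
  ∑ w : Fin (m + 2) → Fin 4 with STadm w, perronWeight (w 0) (w 1)

theorem weightedCount_zero : weightedCount 0 = 2 * (1 + √2) ^ 2 := by
  have hfree : #{w ∈ {w : Fin 2 → Fin 4 | STadm w} | IsFree (w 0) (w 1)} = 4 := by decide
  have hnotFree : #{w ∈ {w : Fin 2 → Fin 4 | STadm w} | ¬ IsFree (w 0) (w 1)} = 6 := by decide
  have hsq : √2 ^ 2 = (2 : ℝ) := Real.sq_sqrt zero_le_two
  rw [weightedCount, sum_perronWeight, hfree, hnotFree]
  push_cast
  linear_combination -2 * hsq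

theorem weightedCount_succ (m : ℕ) : weightedCount (m + 1) = (1 + √2) * weightedCount m := by
  simp only [weightedCount, sum_filter]
  rw [sum_univ_fin_cons, mul_sum]
  refine sum_congr rfl fun w _ ↦ ?_
  simp only [STadm_cons_iff]
  by_cases hw : STadm w
  · simp [hw, ← sum_perronWeight_canPrecede, sum_filter]
  · simp [hw]

theorem weightedCount_eq (m : ℕ) : weightedCount m = 2 * (1 + √2) ^ (m + 2) := by
  induction m with
  | zero => exact weightedCount_zero
  | succ m ih =>
    rw [weightedCount_succ, ih]
    ring

theorem N4_add_two (m : ℕ) :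
    N4 (m + 2) = #{w : Fin (m + 2) → Fin 4 | STadm w} :=
  if_neg (Nat.succ_ne_zero _)

theorem N4_le_weightedCount (m : ℕ) : N4 (m + 2) ≤ weightedCount m := by
  rw [N4_add_two, weightedCount, ← nsmul_one]
  exact card_nsmul_le_sum _ _ _ fun w _ ↦ one_le_perronWeight _ _

theorem weightedCount_le_N4_mul (m : ℕ) : weightedCount m ≤ N4 (m + 2) * √2 := by
  rw [N4_add_two, weightedCount, ← nsmul_eq_mul]
  exact sum_le_card_nsmul _ _ _ fun w _ ↦ perronWeight_le_sqrt_two _ _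

theorem N4_isTheta_pow : (fun m ↦ (N4 m : ℝ)) =Θ[atTop] fun m ↦ (1 + √2) ^ m := by
  constructor
  · refine IsBigO.of_bound 2 ?_
    filter_upwards [eventually_ge_atTop 2] with m hm
    obtain ⟨k, rfl⟩ := Nat.exists_eq_add_of_le' hm
    rw [Real.norm_of_nonneg (by positivity), Real.norm_of_nonneg (by positivity),
      ← weightedCount_eq]
    exact N4_le_weightedCount k
  · refine IsBigO.of_bound (√2 / 2) ?_
    filter_upwards [eventually_ge_atTop 2] with m hm
    obtain ⟨k, rfl⟩ := Nat.exists_eq_add_of_le' hm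
    rw [Real.norm_of_nonneg (by positivity), Real.norm_of_nonneg (by positivity)]
    linarith [weightedCount_eq k, weightedCount_le_N4_mul k]

end AdmissibleWords

theorem st_capacity :
    Filter.Tendsto (fun m : ℕ => Real.logb 2 (N4 m) / (m : ℝ)) Filter.atTop
      (nhds (Real.logb 2 (1 + Real.sqrt 2))) ∧
    (1 + Real.sqrt 2) ^ 2 - 2 * (1 + Real.sqrt 2) - 1 = 0 ∧
    (∀ x : ℝ, x ^ 2 - 2 * x - 1 = 0 → x ≤ 1 + Real.sqrt 2) := by
  refine ⟨tendsto_logb_div_of_isTheta_pow 2 (by positivity) N4_isTheta_pow, ?_, fun x hx ↦ ?_⟩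
  · linear_combination Real.sq_sqrt (zero_le_two (α := ℝ))
  · have hsq : (x - 1) ^ 2 ≤ 2 := by linarith
    linarith [Real.le_sqrt_of_sq_le hsq]

end STLOCO
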